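/- arXiv:2103.17169 — 2 statements merged into one kernel-verified Lean document; each statement's English description precedes it below -/
import Mathlib

section
/- The ideal Fin'_ω is a Σ⁰_ω subset of 2^ω and its Borel separation rank equals ω, i.e., rk(Fin'_ω) = ω. -/
/-- An ideal on a set `X`: a family of subsets of `X` closed under subsets and
finite unions, containing all finite sets, and proper. -/
structure IdealOn (X : Type*) where
  sets : Set (Set X)
  subset_mem : ∀ ⦃A B : Set X⦄, A ∈ sets → B ⊆ A → B ∈ sets
  union_mem : ∀ ⦃A B : Set X⦄, A ∈ sets → B ∈ sets → A ∪ B ∈ sets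
  finite_mem : ∀ A : Set X, A.Finite → A ∈ sets
  univ_not_mem : Set.univ ∉ sets

/-- The dual filter of an ideal: the family of complements of its members. -/
def IdealOn.dual {X : Type*} (I : IdealOn X) : Set (Set X) := (·ᶜ) '' I.sets

/-- `FinPow n` is the Fubini power `Fin^{n+1}` of the ideal of finite sets, an
ideal on `ω^{n+1}` (represented as `Fin (n+1) → ℕ`). -/
def FinPow : (n : ℕ) → Set (Set (Fin (n + 1) → ℕ))
  | 0 => {A | A.Finite}
  | n + 1 => {A | {k : ℕ | {y : Fin (n + 1) → ℕ | Fin.cons k y ∈ A} ∉ FinPow n}.Finite}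

/-- Projection of `ω^n` onto the last `m` coordinates. -/
def lastProj {m n : ℕ} (h : m ≤ n) (x : Fin n → ℕ) : Fin m → ℕ :=
  fun k => x ⟨n - m + k.val, by have := k.isLt; omega⟩

/-- The inductive limit `Fin_ω` of the Fubini powers `(Fin^n)_{n>0}` along the
projections onto the last coordinates. -/
def FinOmega : Set (Set (Σ n : ℕ, Fin (n + 1) → ℕ)) :=
  {M | ∃ m : ℕ, ∃ P : Set (Fin (m + 1) → ℕ), Pᶜ ∈ FinPow m ∧
    ∀ (n : ℕ) (h : m ≤ n), ∀ x : Fin (n + 1) → ℕ,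
      lastProj (Nat.succ_le_succ h) x ∈ P → (⟨n, x⟩ : Σ n : ℕ, Fin (n + 1) → ℕ) ∉ M}

/-- A system of partitions `{X_s : s ∈ ω^{n+1}}` of `ω` into infinite sets,
with all finite cross-intersections infinite. -/
structure PartitionSystem (X : (n : ℕ) → (Fin (n + 1) → ℕ) → Set ℕ) : Prop where
  infinite : ∀ n s, (X n s).Infinite
  disjoint : ∀ (n : ℕ) (s t : Fin (n + 1) → ℕ), s ≠ t → Disjoint (X n s) (X n t)
  cover : ∀ n : ℕ, (⋃ s, X n s) = Set.univ
  cross : ∀ (F : Finset ℕ) (s : ∀ i : ℕ, Fin (i + 1) → ℕ),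
    (⋂ i ∈ F, X i (s i)).Infinite

/-- The copy `Fin^{n+2}({X_s : s ∈ ω^{n+1}})` on `ω` of the Fubini power,
with partition pieces `X s`. -/
def FinPowCopy {n : ℕ} (X : (Fin (n + 1) → ℕ) → Set ℕ) : Set (Set ℕ) :=
  {A | {s : Fin (n + 1) → ℕ | ¬ (A ∩ X s).Finite} ∈ FinPow n}

/-- `Fin'_ω`: the ideal on `ω` generated by `⋃ n, Fin^{n+2}({X_s : s ∈ ω^{n+1}})`. -/
def FinOmega' (X : (n : ℕ) → (Fin (n + 1) → ℕ) → Set ℕ) : Set (Set ℕ) :=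
  {A | ∃ F : Finset ℕ, ∃ B : ℕ → Set ℕ,
    (∀ n ∈ F, B n ∈ FinPowCopy (X n)) ∧ A ⊆ ⋃ n ∈ F, B n}

/-- The additive Borel pointclass `Σ⁰_α` (for `α ≥ 1`): `Σ⁰_1` consists of the
open sets, and for `α ≥ 2`, `Σ⁰_α` consists of countable unions of sets whose
complements lie in `Σ⁰_β` for ordinals `1 ≤ β < α`. -/
inductive SigmaMem {Y : Type*} [TopologicalSpace Y] : Ordinal → Set Y → Prop
  | isOpen {α : Ordinal} (h : 1 ≤ α) {s : Set Y} (hs : IsOpen s) : SigmaMem α s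
  | iUnion {α : Ordinal} (f : ℕ → Set Y) (g : ℕ → Ordinal)
      (hg : ∀ n, 1 ≤ g n ∧ g n < α) (hf : ∀ n, SigmaMem (g n) (f n)ᶜ) :
      SigmaMem α (⋃ n, f n)

/-- The subset of Cantor space `2^Y` of characteristic functions of members of
a family `I` of subsets of `Y`. -/
def chSet {Y : Type*} (I : Set (Set Y)) : Set (Y → Bool) :=
  {f | {y | f y = true} ∈ I}

/-- The dual family of a family of subsets: the complements of its members. -/
def dualFam {X : Type*} (I : Set (Set X)) : Set (Set X) := {B | Bᶜ ∈ I}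

/-- `I` separates from its dual at level `Σ⁰_{1+α}`: there is `S ∈ Σ⁰_{1+α}`
with `I ⊆ S` and `I* ∩ S = ∅` (in Cantor space `2^ω`). -/
def RankLE (I : Set (Set ℕ)) (α : Ordinal) : Prop :=
  ∃ S : Set (ℕ → Bool), SigmaMem (1 + α) S ∧ chSet I ⊆ S ∧
    chSet (dualFam I) ∩ S = ∅

/-!
Dually, `Fin'_ω` is the filter `⨅ n, 𝓕 n`, where `𝓕 n` is an iterated limit of cofinite filters on
the pieces `X n s`.

Upper bound: a filter obtained from principal ones by finitely many layers of countable suprema and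
countable directed infima is of finite Borel class. Each `𝓕 n` is of this kind, and so is a finite
infimum of them, because an infimum of two countable suprema can be rewritten as a supremum of
infima in which one of the two suprema has been peeled off. Being in `⨅ n, 𝓕 n` means being in a
finite infimum, which is a countable union of such conditions.

Lower bound: for `S` of finite Borel class, membership of `x` in `S` can be guessed from `x ↾ e`,
correctly for `𝓕 n`-almost all `e` once `n` is large, since each of the limits in `𝓕 n` absorbs one
countable union. The point `x` defined by copying the guesses about itself is, for almost all `e`,
`1` at `e` exactly when `x ∈ S`; so `S` does not separate the ideal from its dual filter.
-/

section BorelClasses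

open Set

variable {Y : Type*} [TopologicalSpace Y] {α β : Ordinal} {S : Set Y}

theorem SigmaMem.one_le (h : SigmaMem α S) : 1 ≤ α := by
  cases h with
  | isOpen hα _ => exact hα
  | iUnion _ _ hg _ => exact (hg 0).1.trans (hg 0).2.le

theorem SigmaMem.mono (h : SigmaMem α S) (hαβ : α ≤ β) : SigmaMem β S := by
  cases h with
  | isOpen hα hS => exact .isOpen (hα.trans hαβ) hS
  | iUnion f g hg hf => exact .iUnion f g (fun n => ⟨(hg n).1, (hg n).2.trans_le hαβ⟩) hf

theorem SigmaMem.compl_of_lt (h : SigmaMem α S) (hαβ : α < β) : SigmaMem β Sᶜ := by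
  have hUnion : SigmaMem β (⋃ _ : ℕ, Sᶜ) :=
    .iUnion _ (fun _ => α) (fun _ => ⟨h.one_le, hαβ⟩) fun _ => by rwa [compl_compl]
  rwa [iUnion_const] at hUnion

theorem SigmaMem.iUnion_of_countable {ι : Type*} [Countable ι] {f : ι → Set Y} (hα : 1 ≤ α)
    (h : ∀ i, ∃ β < α, SigmaMem β (f i)ᶜ) : SigmaMem α (⋃ i, f i) := by
  rcases isEmpty_or_nonempty ι with _ | _
  · rw [iUnion_of_empty]
    exact .isOpen hα isOpen_empty
  · obtain ⟨enum, henum⟩ := exists_surjective_nat ι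
    choose level hlt hlevel using h
    rw [← henum.iUnion_comp]
    exact .iUnion _ (fun n => level (enum n)) (fun n => ⟨(hlevel _).one_le, hlt _⟩)
      fun n => hlevel _

/-- The ambiguous Borel class `Δ⁰_α`. -/
def DeltaMem (α : Ordinal) (S : Set Y) : Prop :=
  SigmaMem α S ∧ SigmaMem α Sᶜ

theorem DeltaMem.compl (h : DeltaMem α S) : DeltaMem α Sᶜ :=
  ⟨h.2, by rw [compl_compl]; exact h.1⟩

theorem DeltaMem.of_isClopen (hα : 1 ≤ α) (hS : IsClopen S) : DeltaMem α S :=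
  ⟨.isOpen hα hS.isOpen, .isOpen hα hS.compl.isOpen⟩

theorem DeltaMem.iUnion {ι : Type*} [Countable ι] {f : ι → Set Y} (hα : 1 ≤ α)
    (h : ∀ i, DeltaMem α (f i)) : DeltaMem (α + 2) (⋃ i, f i) := by
  have hlt : α < α + 1 := Order.lt_add_one_iff.2 le_rfl
  have hlt' : α + 1 < α + 2 := by
    rw [← one_add_one_eq_two, ← add_assoc]
    exact Order.lt_add_one_iff.2 le_rfl
  have hUnion : SigmaMem (α + 1) (⋃ i, f i) :=
    .iUnion_of_countable (hα.trans hlt.le) fun i => ⟨α, hlt, (h i).2⟩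
  exact ⟨hUnion.mono hlt'.le, hUnion.compl_of_lt hlt'⟩

theorem DeltaMem.iInter {ι : Type*} [Countable ι] {f : ι → Set Y} (hα : 1 ≤ α)
    (h : ∀ i, DeltaMem α (f i)) : DeltaMem (α + 2) (⋂ i, f i) := by
  rw [iInter_eq_compl_iUnion_compl]
  exact (DeltaMem.iUnion hα fun i => (h i).compl).compl

end BorelClasses

section BuildRank

open Filter Set

variable {α ι κ : Type*}

theorem mem_iSup_of_injective_of_forall_le {F : ι → Filter α} {U : ι → Set α} {V : κ → Set α}
    {a : ι → ℕ} {b : κ → ℕ} (hb : b.Injective) (hU : ∀ i, U i ∈ F i)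
    (hV : ∀ j, V j ∈ ⨆ i, F i) :
    {x | ∃ i, x ∈ U i ∧ ∀ j, b j ≤ a i → x ∈ V j} ∈ ⨆ i, F i := by
  refine mem_iSup.2 fun i => ?_
  have hfin : {j | b j ≤ a i}.Finite := (finite_Iic (a i)).preimage hb.injOn
  filter_upwards [hU i, (eventually_all_finite hfin).2 fun j _ => mem_iSup.1 (hV j) i]
    with x hxU hxV using ⟨i, hxU, hxV⟩

-- Given witnesses `U i ∩ V i ⊆ A` for `F i ⊓ ⨆ j, G j` and `U' j ∩ V' j ⊆ A` for
-- `(⨆ i, F i) ⊓ G j`, a point of the first large set belongs to some `U i` and to all `U' j` with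
-- `j` enumerated before `i`; symmetrically for the second. The earlier of `i`, `j` decides.
theorem iSup_inf_iSup_of_countable [Countable ι] [Countable κ] (F : ι → Filter α)
    (G : κ → Filter α) :
    (⨆ i, F i) ⊓ (⨆ j, G j) = (⨆ i, F i ⊓ ⨆ j, G j) ⊔ ⨆ j, (⨆ i, F i) ⊓ G j := by
  refine le_antisymm (fun A hA => ?_) (sup_le
    (iSup_le fun i => inf_le_inf_right _ (le_iSup F i))
    (iSup_le fun j => inf_le_inf_left _ (le_iSup G j)))
  obtain ⟨a, ha⟩ := exists_injective_nat ι
  obtain ⟨b, hb⟩ := exists_injective_nat κ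
  simp only [mem_sup, mem_iSup, mem_inf_iff_superset] at hA
  choose U hU V hV hUV using hA.1
  choose U' hU' V' hV' hUV' using hA.2
  refine mem_inf_iff_superset.2
    ⟨_, mem_iSup_of_injective_of_forall_le (a := a) hb hU fun j => mem_iSup.2 (hU' j),
      _, mem_iSup_of_injective_of_forall_le (a := b) ha hV' fun i => mem_iSup.2 (hV i), ?_⟩
  rintro x ⟨⟨i, hxU, hxU'⟩, j, hxV', hxV⟩
  rcases le_total (a i) (b j) with hij | hji
  · exact hUV i ⟨hxU, hxV i hij⟩
  · exact hUV' j ⟨hxU' j hji, hxV'⟩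

/-- `HasBuildRank n F` says that the filter `F` is obtained from principal filters by `n` layers of
countable suprema and countable directed infima. It measures the Borel complexity of `F`. -/
inductive HasBuildRank : ℕ → Filter α → Prop
  | principal (s : Set α) : HasBuildRank 0 (𝓟 s)
  | iSup {ι : Type} [Countable ι] {n : ℕ} {F : ι → Filter α} (hF : ∀ i, HasBuildRank n (F i)) :
      HasBuildRank (n + 1) (⨆ i, F i)
  | iInf {ι : Type} [Countable ι] [Nonempty ι] {n : ℕ} {F : ι → Filter α}
      (hdir : Directed (· ≥ ·) F) (hF : ∀ i, HasBuildRank n (F i)) :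
      HasBuildRank (n + 1) (⨅ i, F i)

theorem HasBuildRank.inf_principal {n : ℕ} {F : Filter α} (hF : HasBuildRank n F) (s : Set α) :
    HasBuildRank n (F ⊓ 𝓟 s) := by
  induction hF with
  | principal t =>
    rw [Filter.inf_principal]
    exact .principal _
  | iSup _ ih =>
    rw [← iSup_inf_principal]
    exact .iSup ih
  | iInf hdir _ ih =>
    rw [iInf_inf]
    exact .iInf (hdir.mono_comp (rb := (· ≥ ·)) _ fun _ _ h => inf_le_inf_right _ h) ih

theorem HasBuildRank.inf {m n : ℕ} {F G : Filter α} (hF : HasBuildRank m F)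
    (hG : HasBuildRank n G) : HasBuildRank (m + n) (F ⊓ G) := by
  induction hF generalizing n G with
  | principal s =>
    rw [inf_comm, zero_add]
    exact hG.inf_principal s
  | @iInf _ _ _ m F hdir _ ihF =>
    rw [iInf_inf, add_right_comm]
    exact .iInf (hdir.mono_comp (rb := (· ≥ ·)) _ fun _ _ h => inf_le_inf_right _ h)
      fun i => ihF i hG
  | @iSup _ _ m F hF ihF =>
    induction hG with
    | principal s => exact (HasBuildRank.iSup hF).inf_principal s
    | @iInf _ _ _ n G hdir _ ihG =>
      rw [inf_iInf]
      exact .iInf (hdir.mono_comp (rb := (· ≥ ·)) _ fun _ _ h => inf_le_inf_left _ h) ihG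
    | @iSup _ _ n G hG ihG =>
      have hsum := iSup_sum (f := Sum.elim (fun i => F i ⊓ ⨆ j, G j) fun j => (⨆ i, F i) ⊓ G j)
      simp only [Sum.elim_inl, Sum.elim_inr] at hsum
      rw [iSup_inf_iSup_of_countable, ← hsum]
      refine .iSup (n := m + 1 + n) (Sum.rec (fun i => ?_) ihG)
      rw [add_right_comm, add_assoc]
      exact ihF i (.iSup hG)

theorem exists_hasBuildRank_biInf {F : ι → Filter α} (hF : ∀ i, ∃ n, HasBuildRank n (F i))
    (t : Finset ι) : ∃ n, HasBuildRank n (⨅ i ∈ t, F i) := by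
  classical
  induction t using Finset.induction_on with
  | empty => exact ⟨0, by simpa using HasBuildRank.principal univ⟩
  | insert i t _ ih =>
    obtain ⟨m, hm⟩ := hF i
    obtain ⟨n, hn⟩ := ih
    rw [Finset.iInf_insert]
    exact ⟨m + n, hm.inf hn⟩

theorem hasBuildRank_atTop : HasBuildRank 1 (atTop : Filter ℕ) :=
  .iInf (directed_of_isDirected_le fun _ _ h => principal_mono.2 (Ici_subset_Ici.2 h))
    fun _ => .principal _

theorem directed_iSup_Ici (G : ℕ → Filter α) :
    Directed (· ≥ ·) fun m : ℕ => ⨆ i : Ici m, G i :=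
  directed_of_isDirected_le fun _ _ h =>
    iSup_le fun i => le_iSup_of_le ⟨i, mem_Ici.2 (h.trans i.2)⟩ le_rfl

theorem bind_atTop_eq_iInf_iSup (G : ℕ → Filter α) :
    atTop.bind G = ⨅ m : ℕ, ⨆ i : Ici m, G i := by
  ext A
  simp only [mem_bind', mem_iInf_of_directed (directed_iSup_Ici G), mem_iSup, Subtype.forall,
    mem_Ici]
  exact eventually_atTop

theorem HasBuildRank.bind_atTop {n : ℕ} {G : ℕ → Filter α} (hG : ∀ i, HasBuildRank n (G i)) :
    HasBuildRank (n + 2) (atTop.bind G) := by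
  rw [bind_atTop_eq_iInf_iSup]
  exact .iInf (directed_iSup_Ici G) fun m => .iSup fun i => hG i

theorem HasBuildRank.deltaMem_eventually {Z : Type*} [TopologicalSpace Z] [Countable α] {n : ℕ}
    {F : Filter α} (hF : HasBuildRank n F) {γ : Ordinal} (hγ : 1 ≤ γ) {P : Z → α → Prop}
    (hP : ∀ a, DeltaMem γ {z | P z a}) :
    DeltaMem (γ + (2 * n + 2 : ℕ)) {z | ∀ᶠ a in F, P z a} := by
  have hlevel (k : ℕ) : 1 ≤ γ + (k : Ordinal) := hγ.trans (by simp)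
  have hsucc (k : ℕ) : γ + (2 * (k + 1) + 2 : ℕ) = γ + (2 * k + 2 : ℕ) + 2 := by
    push_cast [mul_add]
    simp only [add_assoc]
  induction hF with
  | principal s =>
    simpa [ofPred_forall] using DeltaMem.iInter hγ fun a : s => hP a
  | @iSup _ _ n F _ ih =>
    simp only [eventually_iSup, ofPred_forall, hsucc]
    exact .iInter (hlevel _) ih
  | @iInf _ _ _ n F hdir _ ih =>
    have hmem (z : Z) : (∀ᶠ a in ⨅ i, F i, P z a) ↔ ∃ i, ∀ᶠ a in F i, P z a :=
      mem_iInf_of_directed hdir _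
    simp only [hmem, ofPred_exists, hsucc]
    exact .iUnion (hlevel _) ih

end BuildRank

section FrechetPowers

open Filter Set

variable {α : Type*}

/-- The `d`-th Fubini power of the Fréchet filter on `ω`, living on `ω^d`. For `d = n + 1` it is the
dual filter of `FinPow n`. -/
def frechetPow : (d : ℕ) → Filter (Fin d → ℕ)
  | 0 => pure default
  | d + 1 => atTop.bind fun i => (frechetPow d).map (Fin.cons (α := fun _ => ℕ) i)

theorem frechetPow_succ_bind {d : ℕ} (G : (Fin (d + 1) → ℕ) → Filter α) :
    (frechetPow (d + 1)).bind G =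
      atTop.bind fun i => (frechetPow d).bind fun s => G (Fin.cons i s) := by
  ext A
  simp only [frechetPow, mem_bind']
  rfl

theorem mem_frechetPow_succ {d : ℕ} {A : Set (Fin (d + 1) → ℕ)} :
    A ∈ frechetPow (d + 1) ↔ ∀ᶠ i in atTop, Fin.cons i ⁻¹' A ∈ frechetPow d :=
  mem_bind'

instance frechetPow_neBot (d : ℕ) : (frechetPow d).NeBot := by
  induction d with
  | zero => exact pure_neBot
  | succ d _ =>
    refine forall_mem_nonempty_iff_neBot.1 fun A hA => ?_
    obtain ⟨i, hi⟩ := (mem_frechetPow_succ.1 hA).exists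
    obtain ⟨s, hs⟩ := Filter.nonempty_of_mem hi
    exact ⟨_, hs⟩

theorem frechetPow_one : frechetPow 1 = cofinite := by
  have hmap : frechetPow 1 = cofinite.map (Equiv.funUnique (Fin 1) ℕ).symm := by
    rw [Nat.cofinite_eq_atTop]
    ext A
    rw [mem_frechetPow_succ, mem_map]
    refine eventually_congr (Eventually.of_forall fun i => ?_)
    have hcons : (Equiv.funUnique (Fin 1) ℕ).symm i = Fin.cons i default :=
      (Equiv.symm_apply_eq _).2 rfl
    rw [hcons]
    rfl
  rw [hmap]
  exact le_antisymm (Equiv.injective _).tendsto_cofinite (Equiv.surjective _).le_map_cofinite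

theorem mem_finPow_iff {n : ℕ} {A : Set (Fin (n + 1) → ℕ)} :
    A ∈ FinPow n ↔ Aᶜ ∈ frechetPow (n + 1) := by
  induction n with
  | zero =>
    rw [frechetPow_one, mem_cofinite, compl_compl]
    rfl
  | succ n ih =>
    change {k | _ ∉ FinPow n}.Finite ↔ _
    rw [mem_frechetPow_succ, ← Nat.cofinite_eq_atTop, eventually_cofinite]
    simp only [ih]
    rfl

theorem HasBuildRank.frechetPow_bind {d n : ℕ} {G : (Fin d → ℕ) → Filter α}
    (hG : ∀ s, HasBuildRank n (G s)) : HasBuildRank (n + 2 * d) ((frechetPow d).bind G) := by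
  induction d with
  | zero =>
    rw [frechetPow, pure_bind]
    exact hG _
  | succ d ih =>
    rw [frechetPow_succ_bind]
    exact .bind_atTop fun i => ih fun s => hG _

/-- The dual filter of the copy `Fin^{n+2}({X_s : s ∈ ω^{n+1}})`, for `d = n + 1`: almost every
piece `X s` is almost contained in a member. -/
def fubiniFilter {d : ℕ} (X : (Fin d → ℕ) → Set α) : Filter α :=
  (frechetPow d).bind fun s => cofinite ⊓ 𝓟 (X s)

theorem fubiniFilter_le_cofinite {d : ℕ} (X : (Fin d → ℕ) → Set α) : fubiniFilter X ≤ cofinite :=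
  bind_le (Eventually.of_forall fun _ => inf_le_left)

theorem HasBuildRank.fubiniFilter {d : ℕ} (X : (Fin d → ℕ) → Set ℕ) :
    HasBuildRank (1 + 2 * d) (fubiniFilter X) := by
  refine .frechetPow_bind fun s => ?_
  rw [Nat.cofinite_eq_atTop]
  exact hasBuildRank_atTop.inf_principal _

theorem mem_finPowCopy_iff {n : ℕ} {X : (Fin (n + 1) → ℕ) → Set ℕ} {A : Set ℕ} :
    A ∈ FinPowCopy X ↔ Aᶜ ∈ fubiniFilter X := by
  have hpiece (s : Fin (n + 1) → ℕ) : (A ∩ X s).Finite ↔ Aᶜ ∈ cofinite ⊓ 𝓟 (X s) := by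
    rw [mem_inf_principal, mem_cofinite]
    congr! 1
    ext e
    simp [and_comm]
  simp only [FinPowCopy, mem_ofPred_eq, mem_finPow_iff, fubiniFilter, mem_bind', hpiece,
    compl_ofPred, not_not]

/-- The dual filter of `Fin'_ω`. -/
def finOmegaFilter (X : (n : ℕ) → (Fin (n + 1) → ℕ) → Set ℕ) : Filter ℕ :=
  ⨅ n, fubiniFilter (X n)

theorem finOmega'_eq_dualFam (X : (n : ℕ) → (Fin (n + 1) → ℕ) → Set ℕ) :
    FinOmega' X = dualFam (finOmegaFilter X).sets := by
  ext A
  change (∃ F B, _) ↔ Aᶜ ∈ ⨅ n, fubiniFilter (X n)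
  rw [mem_iInf_finite]
  simp only [mem_finPowCopy_iff]
  refine exists_congr fun F => ⟨?_, fun hA => ?_⟩
  · rintro ⟨B, hB, hAB⟩
    refine mem_of_superset ((biInter_finset_mem F).2 fun n hn =>
      mem_iInf_of_mem n (mem_iInf_of_mem hn (hB n hn))) ?_
    simpa only [compl_iUnion] using compl_subset_compl.2 hAB
  · obtain ⟨B, hB, hAB⟩ := mem_iInf_finset.1 hA
    refine ⟨fun n => (B n)ᶜ, by simpa only [compl_compl] using hB, ?_⟩
    rw [← compl_compl A, hAB, compl_iInter₂]

theorem PartitionSystem.finOmegaFilter_neBot {X : (n : ℕ) → (Fin (n + 1) → ℕ) → Set ℕ}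
    (hX : PartitionSystem X) : (finOmegaFilter X).NeBot := by
  refine ⟨fun hbot => ?_⟩
  obtain ⟨t, ht⟩ := (mem_iInf_finite _).1 (empty_mem_iff_bot.2 hbot)
  obtain ⟨U, hU, hempty⟩ := mem_iInf_finset.1 ht
  have hpiece (n : ℕ) : ∃ s, n ∈ t → U n ∈ cofinite ⊓ 𝓟 (X n s) := by
    by_cases hn : n ∈ t
    · obtain ⟨s, hs⟩ := Eventually.exists (mem_bind'.1 (hU n hn))
      exact ⟨s, fun _ => hs⟩
    · exact ⟨default, fun h => absurd h hn⟩
  choose s hs using hpiece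
  have := (hX.cross t s).cofinite_inf_principal_neBot
  refine empty_notMem (cofinite ⊓ 𝓟 (⋂ n ∈ t, X n (s n))) ?_
  rw [hempty]
  exact (biInter_finset_mem t).2 fun n hn =>
    inf_le_inf_left _ (principal_mono.2 (biInter_subset_of_mem hn)) (hs n hn)

theorem sigmaMem_omega0_finOmegaFilter (X : (n : ℕ) → (Fin (n + 1) → ℕ) → Set ℕ) :
    SigmaMem Ordinal.omega0 (chSet (dualFam (finOmegaFilter X).sets)) := by
  have hmem : chSet (dualFam (finOmegaFilter X).sets) =
      ⋃ t : Finset ℕ, {x | ∀ᶠ e in ⨅ n ∈ t, fubiniFilter (X n), ¬ x e = true} := by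
    ext x
    rw [mem_iUnion]
    exact mem_iInf_finite _
  rw [hmem]
  refine .iUnion_of_countable Ordinal.one_lt_omega0.le fun t => ?_
  obtain ⟨n, hn⟩ := exists_hasBuildRank_biInf (fun n => ⟨_, .fubiniFilter (X n)⟩) t
  have hcoord (e : ℕ) : DeltaMem 1 {x : ℕ → Bool | ¬ x e = true} :=
    .of_isClopen le_rfl ((isClopen_discrete {true}ᶜ).preimage (continuous_apply e))
  refine ⟨_, ?_, (hn.deltaMem_eventually le_rfl hcoord).2⟩
  exact_mod_cast Ordinal.natCast_lt_omega0 (1 + (2 * n + 2))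

end FrechetPowers

section Prediction

open Filter Set

/-- A set `S ⊆ 2^ω` is predictable along `F` if some sequence of guesses, the `e`-th of which sees
only the first `e` values of `x`, decides correctly whether `x ∈ S` at `F`-almost all stages. -/
def PredictableAlong (F : Filter ℕ) (S : Set (ℕ → Bool)) : Prop :=
  ∃ g : (e : ℕ) → (Fin e → Bool) → Prop, ∀ x, ∀ᶠ e in F, g e (fun i => x i) ↔ x ∈ S

variable {F : Filter ℕ} {S : Set (ℕ → Bool)}

theorem PredictableAlong.mono {F' : Filter ℕ} (h : PredictableAlong F S) (hF : F' ≤ F) :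
    PredictableAlong F' S :=
  let ⟨g, hg⟩ := h
  ⟨g, fun x => hF (hg x)⟩

theorem PredictableAlong.compl (h : PredictableAlong F S) : PredictableAlong F Sᶜ :=
  let ⟨g, hg⟩ := h
  ⟨fun e u => ¬ g e u, fun x => (hg x).mono fun _ he => not_congr he⟩

theorem PredictableAlong.of_isOpen (hF : F ≤ atTop) (hS : IsOpen S) : PredictableAlong F S := by
  refine ⟨fun e u => {y : ℕ → Bool | ∀ i : Fin e, y i = u i} ⊆ S, fun x => hF ?_⟩
  by_cases hx : x ∈ S
  · obtain ⟨_, ⟨z, m, rfl⟩, hxz, hsub⟩ :=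
      (PiNat.isTopologicalBasis_cylinders fun _ => Bool).exists_subset_of_mem_open hx hS
    filter_upwards [eventually_ge_atTop m] with e he
    refine iff_of_true (fun y hy => hsub ?_) hx
    exact fun i hi => (hy ⟨i, hi.trans_le he⟩).trans (hxz i hi)
  · exact Eventually.of_forall fun e => iff_of_false (fun h => hx (h fun _ => rfl)) hx

-- On the part of `ω` where `p = i`, guess that `x` belongs to one of `S 0, …, S i`: finitely many
-- predictions are eventually correct simultaneously, and `i` is eventually large enough.
theorem PredictableAlong.iUnion {F : ℕ → Filter ℕ} {S : ℕ → Set (ℕ → Bool)} {p : ℕ → ℕ}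
    (hp : ∀ i, ∀ᶠ e in F i, p e = i) (hS : ∀ i j, PredictableAlong (F i) (S j)) :
    PredictableAlong (atTop.bind F) (⋃ j, S j) := by
  choose g hg using hS
  refine ⟨fun e u => ∃ j ≤ p e, g (p e) j e u, fun x => eventually_bind.2 ?_⟩
  have hbound : ∀ᶠ i in atTop, (∃ j ≤ i, x ∈ S j) ↔ x ∈ ⋃ j, S j := by
    by_cases hx : x ∈ ⋃ j, S j
    · obtain ⟨j, hj⟩ := mem_iUnion.1 hx
      filter_upwards [eventually_ge_atTop j] with i hi using iff_of_true ⟨j, hi, hj⟩ hx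
    · exact Eventually.of_forall fun i =>
        iff_of_false (fun ⟨j, _, hj⟩ => hx (mem_iUnion.2 ⟨j, hj⟩)) hx
  filter_upwards [hbound] with i hi
  filter_upwards [hp i, (eventually_all_finite (finite_Iic i)).2 fun j _ => hg i j x]
    with e hpe hge
  rw [hpe, ← hi]
  exact exists_congr fun j => and_congr_right fun hj => hge j hj

theorem SigmaMem.predictableAlong_frechetPow_bind {α : Ordinal} (hS : SigmaMem α S) {d : ℕ}
    (hα : α ≤ d + 1) {c : ℕ → Fin d → ℕ} {G : (Fin d → ℕ) → Filter ℕ}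
    (hG : ∀ s, G s ≤ cofinite ⊓ 𝓟 (c ⁻¹' {s})) :
    PredictableAlong ((frechetPow d).bind G) S := by
  induction hS generalizing d with
  | isOpen _ hS =>
    rw [Nat.cofinite_eq_atTop] at hG
    exact .of_isOpen (bind_le (Eventually.of_forall fun s => (hG s).trans inf_le_left)) hS
  | iUnion f β hβ _ ih =>
    rcases d with _ | d
    · exact absurd ((hβ 0).1.trans_lt ((hβ 0).2.trans_le hα)) (by simp)
    have hβd (j : ℕ) : β j ≤ d + 1 :=
      Order.lt_add_one_iff.1 ((hβ j).2.trans_le (by exact_mod_cast hα))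
    have hhead (i : ℕ) : ∀ᶠ e in (frechetPow d).bind fun s => G (Fin.cons i s), c e 0 = i :=
      eventually_bind.2 <| Eventually.of_forall fun s => (hG _).trans inf_le_right <|
        mem_principal.2 fun e (he : c e = _) => by simp [he]
    have htail (i : ℕ) (s : Fin d → ℕ) :
        G (Fin.cons i s) ≤ cofinite ⊓ 𝓟 ((fun e => Fin.tail (c e)) ⁻¹' {s}) :=
      (hG _).trans <| inf_le_inf_left _ <| principal_mono.2 fun e (he : c e = _) => by simp [he]
    rw [frechetPow_succ_bind]
    refine .iUnion hhead fun i j => ?_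
    simpa only [compl_compl] using (ih j (hβd j) (htail i)).compl

theorem exists_forall_eq_apply_restrict {β : Type*} (g : (e : ℕ) → (Fin e → β) → β) :
    ∃ x : ℕ → β, ∀ e, x e = g e fun i => x i :=
  ⟨Nat.lt_wfRel.wf.fix fun e x => g e fun i => x i i.2, fun e => Nat.lt_wfRel.wf.fix_eq _ e⟩

-- The point `x` copies the guesses about itself.
theorem PredictableAlong.exists_eventually_iff (h : PredictableAlong F S) :
    ∃ x : ℕ → Bool, ∀ᶠ e in F, x e = true ↔ x ∈ S := by
  classical
  obtain ⟨g, hg⟩ := h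
  obtain ⟨x, hx⟩ := exists_forall_eq_apply_restrict fun e u => decide (g e u)
  refine ⟨x, (hg x).mono fun e he => ?_⟩
  rw [hx e, decide_eq_true_iff, he]

end Prediction

section Rank

open Filter Set

theorem exists_idealOn_sets_eq_dualFam {α : Type*} {F : Filter α} [F.NeBot] (hF : F ≤ cofinite) :
    ∃ K : IdealOn α, K.sets = dualFam F.sets :=
  ⟨{ sets := dualFam F.sets
     subset_mem := fun _ _ hA hBA => mem_of_superset hA (compl_subset_compl.2 hBA)
     union_mem := fun A B hA hB => by
      change (A ∪ B)ᶜ ∈ F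
      rw [compl_union]
      exact inter_mem hA hB
     finite_mem := fun _ hA => hF hA.compl_mem_cofinite
     univ_not_mem := fun h => empty_notMem F (by rwa [← compl_univ]) }, rfl⟩

theorem rankLE_of_sigmaMem {F : Filter ℕ} [F.NeBot] {α : Ordinal}
    (h : SigmaMem (1 + α) (chSet (dualFam F.sets))) : RankLE (dualFam F.sets) α := by
  refine ⟨_, h, subset_rfl, eq_empty_of_forall_notMem ?_⟩
  rintro x ⟨hx, hx'⟩
  exact compl_notMem hx' hx

theorem not_rankLE_of_predictableAlong {F : Filter ℕ} {α : Ordinal}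
    (h : ∀ S, SigmaMem (1 + α) S → PredictableAlong F S) : ¬ RankLE (dualFam F.sets) α := by
  rintro ⟨S, hS, hsub, hdisj⟩
  obtain ⟨x, hx⟩ := (h S hS).exists_eventually_iff
  by_cases hxS : x ∈ S
  · have hxF : {e | x e = true}ᶜᶜ ∈ F := by
      rw [compl_compl]
      exact hx.mono fun e he => he.2 hxS
    exact (hdisj ▸ ⟨hxF, hxS⟩ : x ∈ (∅ : Set (ℕ → Bool)))
  · exact hxS (hsub (hx.mono fun e he => mt he.1 hxS))

theorem PartitionSystem.exists_subset_preimage {X : (n : ℕ) → (Fin (n + 1) → ℕ) → Set ℕ}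
    (hX : PartitionSystem X) (n : ℕ) :
    ∃ c : ℕ → Fin (n + 1) → ℕ, ∀ s, X n s ⊆ c ⁻¹' {s} := by
  choose c hc using iUnion_eq_univ_iff.1 (hX.cover n)
  refine ⟨c, fun s e he => by_contra fun hne => ?_⟩
  exact disjoint_left.1 (hX.disjoint n _ _ hne) (hc e) he

theorem PartitionSystem.predictableAlong_finOmegaFilter
    {X : (n : ℕ) → (Fin (n + 1) → ℕ) → Set ℕ} (hX : PartitionSystem X) {α : Ordinal}
    (hα : α < Ordinal.omega0) {S : Set (ℕ → Bool)} (hS : SigmaMem α S) :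
    PredictableAlong (finOmegaFilter X) S := by
  obtain ⟨n, rfl⟩ := Ordinal.lt_omega0.1 hα
  obtain ⟨c, hc⟩ := hX.exists_subset_preimage n
  refine PredictableAlong.mono (F := fubiniFilter (X n)) ?_ (iInf_le _ n)
  refine hS.predictableAlong_frechetPow_bind ?_ fun s => inf_le_inf_left _ (principal_mono.2 (hc s))
  exact_mod_cast (by omega : n ≤ n + 1 + 1)

end Rank

/-- `Fin'_ω` is an ideal which is a `Σ⁰_ω` subset of `2^ω`,
and its Borel separation rank equals `ω`. -/
theorem finOmega'_sigmaOmega_and_rank (X : (n : ℕ) → (Fin (n + 1) → ℕ) → Set ℕ)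
    (hX : PartitionSystem X) :
    (∃ K : IdealOn ℕ, K.sets = FinOmega' X) ∧
    SigmaMem Ordinal.omega0 (chSet (FinOmega' X)) ∧
    RankLE (FinOmega' X) Ordinal.omega0 ∧
    (∀ α : Ordinal, α < Ordinal.omega0 → ¬ RankLE (FinOmega' X) α) := by
  have := hX.finOmegaFilter_neBot
  rw [finOmega'_eq_dualFam]
  refine ⟨exists_idealOn_sets_eq_dualFam ?_, sigmaMem_omega0_finOmegaFilter X,
    rankLE_of_sigmaMem ?_, fun α hα => not_rankLE_of_predictableAlong fun S hS => ?_⟩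
  · exact (iInf_le _ 0).trans (fubiniFilter_le_cofinite _)
  · rw [Ordinal.one_add_omega0]
    exact sigmaMem_omega0_finOmegaFilter X
  · exact hX.predictableAlong_finOmegaFilter
      (Ordinal.isPrincipal_add_omega0 Ordinal.one_lt_omega0 hα) hS
end

section
/- The ideal Fin_ω does not embed isomorphically into Fin'_ω: there is no bijection f : ω → ∑_{i>0} ω^i such that f⁻¹[A] ∈ Fin'_ω for all A ∈ Fin_ω. -/
/-!
Dualise: a map witnessing the reduction would carry the filter dual to `Fin'_ω` below every filter
`tailFilter m`, the dual of `Fin^m` read off the last `m` letters of a word. The filter dual to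
`Fin'_ω` is an iterated cofinite limit along the tree of cells `X 0 s₀ ∩ ⋯ ∩ X (r - 1) s_(r-1)`.

The key point is that each quantifier "for cofinitely many" costs at most one letter: if every set
of `tailFilter (m + 1)` belongs to cofinitely many members of a family of filters, then cofinitely
many members are below `tailFilter m`. Iterating, the limit at almost every cell of any fixed depth
is still below `tailFilter 2`, so the penultimate letter is unbounded on the image of that cell. As
there are only countably many cells, a set `A` can be chosen which is infinite on each of these
cells while every penultimate letter occurs finitely often in its image. The complement of the image
then lies in `tailFilter 2`, so `A` would have to be finite on almost every cell of some depth.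
-/

namespace FinOmega

open Filter Set

section Cofinite

variable {Ω β ι : Type*}

lemma bind_neBot {l : Filter ι} [l.NeBot] {L : ι → Filter Ω} (hL : ∀ i, (L i).NeBot) :
    (l.bind L).NeBot := by
  simp only [← frequently_true_iff_neBot] at hL ⊢
  exact frequently_bind.2 (Frequently.of_forall hL)

lemma infinite_image_of_tendsto_cofinite {l : Filter Ω} [l.NeBot] {c : Ω → β}
    (hc : Tendsto c l cofinite) {Z : Set Ω} (hZ : Z ∈ l) : (c '' Z).Infinite := by
  intro hfin
  obtain ⟨x, hx, hxZ⟩ := ((hc.eventually hfin.compl_mem_cofinite).and hZ).exists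
  exact hx (mem_image_of_mem c hxZ)

lemma exists_infinite_inter_finite_fibers {𝒮 : Set (Set Ω)} (h𝒮 : 𝒮.Countable) {c : Ω → ℕ}
    (hc : ∀ Z ∈ 𝒮, (c '' Z).Infinite) :
    ∃ A : Set Ω, (∀ Z ∈ 𝒮, (A ∩ Z).Infinite) ∧ ∀ b, (A ∩ c ⁻¹' {b}).Finite := by
  have := h𝒮.to_subtype
  obtain ⟨i, hi⟩ := Countable.exists_injective_nat 𝒮
  have hlarge (Z : 𝒮) (k : ℕ) : ∃ x ∈ Z.1, i Z + k < c x := by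
    simpa using (hc Z Z.2).exists_gt (i Z + k)
  choose g hgZ hgc using hlarge
  refine ⟨range fun q : 𝒮 × ℕ => g q.1 q.2, fun Z hZ hfin => ?_, fun b => ?_⟩
  · obtain ⟨k, hk⟩ := (hfin.image c).bddAbove
    have hle : c (g ⟨Z, hZ⟩ k) ≤ k := hk ⟨_, ⟨⟨(⟨Z, hZ⟩, k), rfl⟩, hgZ ⟨Z, hZ⟩ k⟩, rfl⟩
    have := hgc ⟨Z, hZ⟩ k
    omega
  · have hsmall : ((i ⁻¹' Iic b) ×ˢ Iic b).Finite :=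
      ((finite_Iic b).preimage hi.injOn).prod (finite_Iic b)
    refine (hsmall.image fun q : 𝒮 × ℕ => g q.1 q.2).subset ?_
    rintro _ ⟨⟨⟨Z, k⟩, rfl⟩, hb⟩
    have hlt := hgc Z k
    simp only [mem_preimage, mem_singleton_iff] at hb
    exact ⟨(Z, k), ⟨show i Z ≤ b by omega, show k ≤ b by omega⟩, rfl⟩

end Cofinite

section FiberSum

variable {α β ι : Type*}

/-- The Fubini sum over cofinitely many `b` of the restrictions of `J` to the fibres `c ⁻¹' {b}`:
a set belongs to it if it is `J`-large on almost every fibre. -/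
def fiberSum (J : Filter α) (c : α → β) : Filter α :=
  cofinite.bind fun b => J ⊓ 𝓟 (c ⁻¹' {b})

lemma eventually_fiberSum {J : Filter α} {c : α → β} {p : α → Prop} :
    (∀ᶠ x in fiberSum J c, p x) ↔ ∀ᶠ b in cofinite, ∀ᶠ x in J, c x = b → p x := by
  simp only [fiberSum, eventually_bind, eventually_inf_principal, mem_preimage,
    mem_singleton_iff]

lemma tendsto_fiberSum_cofinite (J : Filter α) (c : α → β) :
    Tendsto c (fiberSum J c) cofinite := by
  intro S hS
  refine eventually_fiberSum.2 ?_
  filter_upwards [hS] with b hb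
  exact Eventually.of_forall fun x hx => by rwa [← hx] at hb

lemma fiberSum_le_cofinite (J : Filter α) (c : α → β) : fiberSum J c ≤ cofinite :=
  (tendsto_fiberSum_cofinite J c).le_comap.trans (comap_cofinite_le c)

lemma compl_mem_fiberSum_of_finite_fibers {J : Filter α} (hJ : J ≤ cofinite) {c : α → β}
    {S : Set α} (hS : ∀ b, (S ∩ c ⁻¹' {b}).Finite) : Sᶜ ∈ fiberSum J c := by
  refine eventually_fiberSum.2 (Eventually.of_forall fun b => ?_)
  filter_upwards [hJ (hS b).compl_mem_cofinite] with x hx hxb hxS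
  exact hx ⟨hxS, hxb⟩

/-- If infinitely many `L i` missed sets of `J`, one could diagonalise: take a sequence of them, the
`n`-th one missing `U n`, and relax `U n` on the fibres below `n`. The `L i` eventually ignore any
finite number of fibres, so after thinning out each still misses its relaxed set; but the
intersection of the relaxed sets is constrained by only finitely many `U n` on every fibre. -/
lemma eventually_le_of_bind_le_fiberSum {J : Filter α} {c : α → ℕ} {L : ι → Filter α}
    (hL : cofinite.bind L ≤ fiberSum J c) : ∀ᶠ i in cofinite, L i ≤ J := by
  by_contra h
  let g := Set.Infinite.natEmbedding {i | ¬ L i ≤ J} h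
  have hLg {U : Set α} (hU : U ∈ fiberSum J c) : ∀ᶠ k in atTop, U ∈ L (g k) := by
    rw [← Nat.cofinite_eq_atTop]
    exact (Subtype.val_injective.comp g.injective).tendsto_cofinite.eventually (hL hU)
  choose U hUJ hUL using fun k => Filter.not_le.1 (g k).2
  have relaxed_notMem (n : ℕ) : ∀ᶠ k in atTop, {x | n ≤ c x → x ∈ U k} ∉ L (g k) := by
    have hc : ∀ᶠ x in fiberSum J c, n ≤ c x :=
      tendsto_fiberSum_cofinite J c (Nat.cofinite_eq_atTop ▸ Ici_mem_atTop n)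
    filter_upwards [hLg hc] with k hk hmem
    refine hUL k ?_
    filter_upwards [hk, hmem] with x hx hxU using hxU hx
  obtain ⟨φ, hφ, hφL⟩ := extraction_forall_of_eventually relaxed_notMem
  have hV : {x | ∀ n ≤ c x, x ∈ U (φ n)} ∈ fiberSum J c := by
    refine eventually_fiberSum.2 (Eventually.of_forall fun b => ?_)
    have hU : ∀ᶠ x in J, ∀ n ∈ Iic b, x ∈ U (φ n) :=
      (eventually_all_finite (finite_Iic b)).2 fun n _ => hUJ (φ n)
    filter_upwards [hU] with x hx hxb n hn using hx n (hn.trans_eq hxb)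
  obtain ⟨n, hn⟩ := (hφ.tendsto_atTop.eventually (hLg hV)).exists
  refine hφL n ?_
  filter_upwards [hn] with x hx using hx n

end FiberSum

section FinPowFilter

/-- The filter on `ω^n` dual to the Fubini power `Fin^n`. In contrast to `FinPow`, the index is the
number of coordinates. -/
def finPowFilter : (n : ℕ) → Filter (Fin n → ℕ)
  | 0 => pure Fin.elim0
  | n + 1 => cofinite.bind fun k : ℕ => (finPowFilter n).map (Fin.cons k : _ → Fin (n + 1) → ℕ)

lemma eventually_finPowFilter_succ {n : ℕ} {p : (Fin (n + 1) → ℕ) → Prop} :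
    (∀ᶠ s in finPowFilter (n + 1), p s) ↔
      ∀ᶠ k in cofinite, ∀ᶠ y in finPowFilter n, p (Fin.cons k y) :=
  Iff.rfl

instance finPowFilter_neBot (n : ℕ) : (finPowFilter n).NeBot := by
  induction n with
  | zero => exact pure_neBot
  | succ n ih => exact bind_neBot fun k => ih.map _

lemma finPowFilter_one : finPowFilter 1 = cofinite := by
  let c : ℕ → Fin 1 → ℕ := fun k => Fin.cons k Fin.elim0
  have hc : c.Bijective :=
    ⟨fun _ _ h => congrFun h 0,
      fun x => ⟨x 0, funext fun i => by rw [Subsingleton.elim i 0]; rfl⟩⟩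
  change map c cofinite = cofinite
  ext S
  rw [mem_map, mem_cofinite, mem_cofinite, ← preimage_compl]
  exact ⟨fun h => h.of_preimage hc.surjective, fun h => h.preimage hc.injective.injOn⟩

lemma mem_finPow_iff_compl_mem {n : ℕ} {A : Set (Fin (n + 1) → ℕ)} :
    A ∈ FinPow n ↔ Aᶜ ∈ finPowFilter (n + 1) := by
  induction n with
  | zero =>
    change A.Finite ↔ Aᶜ ∈ finPowFilter 1
    rw [finPowFilter_one, mem_cofinite, compl_compl]
  | succ n ih =>
    simp only [FinPow, mem_ofPred_eq, ih]
    rfl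

end FinPowFilter

section TailFilter

/-- The index set `∑_{i>0} ω^i` of `Fin_ω`. -/
abbrev Word : Type := Σ n : ℕ, Fin (n + 1) → ℕ

/-- The `m`-th letter of a word counted from the end, starting at `0`. The value `0` for words that
are too short is harmless: a single fibre is negligible in `fiberSum`. -/
def letterFromEnd (m : ℕ) (x : Word) : ℕ :=
  if h : m ≤ x.1 then x.2 ⟨x.1 - m, by omega⟩ else 0

/-- A set belongs to this filter if it contains all words whose last `m` letters form a tuple in
some fixed set of the filter dual to `Fin^m`. The filter dual to `Fin_ω` is the union of these. -/
def tailFilter : ℕ → Filter Word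
  | 0 => ⊤
  | m + 1 => fiberSum (tailFilter m) (letterFromEnd m)

lemma tail_lastProj {m n : ℕ} (h : m + 1 ≤ n) (x : Fin n → ℕ) :
    Fin.tail (lastProj h x) = lastProj (Nat.le_of_succ_le h) x := by
  funext i
  simp only [lastProj, Fin.tail, Fin.val_succ]
  congr 2
  omega

lemma eventually_lastProj_of_eventually_tailFilter {m : ℕ} {p : Word → Prop}
    (hp : ∀ᶠ x in tailFilter m, p x) :
    ∀ᶠ s in finPowFilter m, ∀ (n : ℕ) (h : m ≤ n + 1) (x : Fin (n + 1) → ℕ),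
      lastProj h x = s → p ⟨n, x⟩ := by
  induction m generalizing p with
  | zero => exact Eventually.of_forall fun _ n _ x _ => eventually_top.1 hp ⟨n, x⟩
  | succ m ih =>
    refine eventually_finPowFilter_succ.2 ?_
    filter_upwards [eventually_fiberSum.1 hp] with k hk
    filter_upwards [ih hk] with y hy n h x hx
    refine hy n (by omega) x ?_ ?_
    · rw [← tail_lastProj h, hx, Fin.tail_cons]
    · have hmn : m ≤ n := by omega
      simpa [letterFromEnd, lastProj, hmn] using congrFun hx 0

lemma compl_mem_finOmega {m : ℕ} {U : Set Word} (hU : U ∈ tailFilter (m + 1)) :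
    Uᶜ ∈ FinOmega := by
  refine ⟨m, {s | ∀ (n : ℕ) (h : m + 1 ≤ n + 1) (x : Fin (n + 1) → ℕ),
    lastProj h x = s → ⟨n, x⟩ ∈ U}, mem_finPow_iff_compl_mem.2 ?_,
    fun n h x hx hxU => hxU (hx n (Nat.succ_le_succ h) x rfl)⟩
  rw [compl_compl]
  exact eventually_lastProj_of_eventually_tailFilter hU

lemma eventually_le_tailFilter_of_bind_le {m n : ℕ} {L : (Fin n → ℕ) → Filter Word}
    (hL : (finPowFilter n).bind L ≤ tailFilter (m + n)) :
    ∀ᶠ s in finPowFilter n, L s ≤ tailFilter m := by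
  induction n with
  | zero => exact hL
  | succ n ih =>
    have h := eventually_le_of_bind_le_fiberSum
      (L := fun k => (finPowFilter n).bind fun y => L (Fin.cons k y)) hL
    exact eventually_finPowFilter_succ.2 (h.mono fun k hk => ih hk)

end TailFilter

section Cells

variable {Ω : Type*} (X : (n : ℕ) → (Fin (n + 1) → ℕ) → Set Ω)

/-- The intersection of one piece from each of the first `r` partitions. -/
def cell (r : ℕ) (s : ∀ i : ℕ, Fin (i + 1) → ℕ) : Set Ω :=
  ⋂ i ∈ Finset.range r, X i (s i)

/-- The filter of almost all cells inside `Z` obtained by cutting with one piece from each of the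
partitions `r, …, r + j - 1`, where "almost all" pieces of a partition refers to the dual of the
Fubini power on its index set. -/
def cellFilter : (j r : ℕ) → Set Ω → Filter (Set Ω)
  | 0, _, Z => pure Z
  | j + 1, r, Z => (finPowFilter (r + 1)).bind fun s => cellFilter j (r + 1) (Z ∩ X r s)

/-- The filter of sets containing all but finitely many points of almost all cells of depth `j`
below `Z`. -/
def cofiniteOnCells (j r : ℕ) (Z : Set Ω) : Filter Ω :=
  (cellFilter X j r Z).bind fun Z' => cofinite ⊓ 𝓟 Z'

/-- The union over all depths `j` of the filters `cofiniteOnCells X j r Z`. For `r = 0` and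
`Z = univ`, it is dual to `Fin'_ω`. -/
def cellLimit (r : ℕ) (Z : Set Ω) : Filter Ω :=
  ⨅ j, cofiniteOnCells X j r Z

variable {X} {j r : ℕ} {Z : Set Ω}

lemma eventually_cellFilter_succ {p : Set Ω → Prop} :
    (∀ᶠ Z' in cellFilter X (j + 1) r Z, p Z') ↔
      ∀ᶠ s in finPowFilter (r + 1), ∀ᶠ Z' in cellFilter X j (r + 1) (Z ∩ X r s), p Z' :=
  Iff.rfl

lemma cell_inter (s : ∀ i : ℕ, Fin (i + 1) → ℕ) (t : Fin (r + 1) → ℕ) :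
    cell X r s ∩ X r t = cell X (r + 1) (Function.update s r t) := by
  have hcongr : ∀ i ∈ Finset.range r, X i (Function.update s r t i) = X i (s i) := fun i hi => by
    rw [Function.update_of_ne (Finset.mem_range.1 hi).ne]
  rw [cell, cell, Finset.range_add_one, Finset.set_biInter_insert, Function.update_self,
    iInter₂_congr hcongr, inter_comm]

lemma eventually_cellFilter_cell (s : ∀ i : ℕ, Fin (i + 1) → ℕ) :
    ∀ᶠ Z in cellFilter X j r (cell X r s), ∃ t, Z = cell X (r + j) t := by
  induction j generalizing r s with
  | zero => exact ⟨s, rfl⟩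
  | succ j ih =>
    refine eventually_cellFilter_succ.2 (Eventually.of_forall fun t => ?_)
    rw [cell_inter, show r + (j + 1) = r + 1 + j by omega]
    exact ih _

instance cellFilter_neBot : (cellFilter X j r Z).NeBot := by
  induction j generalizing r Z with
  | zero => exact pure_neBot
  | succ j ih => exact bind_neBot fun s => ih

variable (X j r Z) in
lemma exists_countable_mem_cellFilter : ∃ 𝒞 ∈ cellFilter X j r Z, 𝒞.Countable := by
  induction j generalizing r Z with
  | zero => exact ⟨{Z}, mem_pure.2 rfl, countable_singleton Z⟩
  | succ j ih =>
    choose 𝒞 h𝒞 hcount using fun s => ih (r + 1) (Z ∩ X r s)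
    refine ⟨⋃ s, 𝒞 s, ?_, countable_iUnion hcount⟩
    refine eventually_cellFilter_succ.2 (Eventually.of_forall fun s => ?_)
    exact mem_of_superset (h𝒞 s) (subset_iUnion 𝒞 s)

lemma cofiniteOnCells_succ :
    cofiniteOnCells X (j + 1) r Z =
      (finPowFilter (r + 1)).bind fun s => cofiniteOnCells X j (r + 1) (Z ∩ X r s) :=
  rfl

lemma mem_cofiniteOnCells {U : Set Ω} :
    U ∈ cofiniteOnCells X j r Z ↔ ∀ᶠ Z' in cellFilter X j r Z, (Z' \ U).Finite := by
  simp only [cofiniteOnCells, mem_bind', mem_inf_principal, mem_cofinite]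
  simp only [compl_ofPred, Classical.not_imp]
  rfl

lemma cofiniteOnCells_antitone : Antitone fun j => cofiniteOnCells X j r Z := by
  refine antitone_nat_of_succ_le fun j => ?_
  induction j generalizing r Z with
  | zero =>
    refine fun U hU => mem_cofiniteOnCells.2 (eventually_cellFilter_succ.2 ?_)
    refine Eventually.of_forall fun s => ?_
    have hU' : (Z \ U).Finite := mem_cofiniteOnCells.1 hU
    exact hU'.subset (sdiff_subset_sdiff_left inter_subset_left)
  | succ j ih =>
    rw [cofiniteOnCells_succ, cofiniteOnCells_succ]
    exact bind_mono le_rfl (Eventually.of_forall fun s => ih)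

lemma mem_cellLimit {U : Set Ω} :
    U ∈ cellLimit X r Z ↔ ∃ j, ∀ᶠ Z' in cellFilter X j r Z, (Z' \ U).Finite := by
  rw [cellLimit, mem_iInf_of_directed cofiniteOnCells_antitone.directed_ge]
  simp only [mem_cofiniteOnCells]

lemma self_mem_cellLimit : Z ∈ cellLimit X r Z :=
  mem_cellLimit.2 ⟨0, by simp [cellFilter]⟩

lemma bind_cellLimit_le :
    ((finPowFilter (r + 1)).bind fun s => cellLimit X (r + 1) (Z ∩ X r s)) ≤ cellLimit X r Z := by
  refine le_iInf fun j => ?_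
  calc (finPowFilter (r + 1)).bind (fun s => cellLimit X (r + 1) (Z ∩ X r s))
      ≤ (finPowFilter (r + 1)).bind fun s => cofiniteOnCells X j (r + 1) (Z ∩ X r s) :=
        bind_mono le_rfl (Eventually.of_forall fun s => iInf_le _ j)
    _ = cofiniteOnCells X (j + 1) r Z := cofiniteOnCells_succ.symm
    _ ≤ cofiniteOnCells X j r Z := cofiniteOnCells_antitone j.le_succ

lemma cellLimit_cell_neBot (hX : ∀ r s, (cell X r s).Infinite) (s : ∀ i : ℕ, Fin (i + 1) → ℕ) :
    (cellLimit X r (cell X r s)).NeBot := by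
  refine ⟨fun hbot => ?_⟩
  obtain ⟨j, hj⟩ := mem_cellLimit.1 (empty_mem_iff_bot.2 hbot)
  obtain ⟨_, hfin, t, rfl⟩ := (hj.and (eventually_cellFilter_cell s)).exists
  exact hX _ _ (by simpa using hfin)

lemma exists_eventually_tendsto_cellLimit (f : Ω → Word) (j m r : ℕ) :
    ∃ M, ∀ Z, Tendsto f (cellLimit X r Z) (tailFilter M) →
      ∀ᶠ Z' in cellFilter X j r Z, Tendsto f (cellLimit X (r + j) Z') (tailFilter m) := by
  induction j generalizing r with
  | zero => exact ⟨m, fun Z h => h⟩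
  | succ j ih =>
    obtain ⟨M, hM⟩ := ih (r + 1)
    refine ⟨M + (r + 1), fun Z hZ => ?_⟩
    have h : ∀ᶠ s in finPowFilter (r + 1),
        Tendsto f (cellLimit X (r + 1) (Z ∩ X r s)) (tailFilter M) := by
      refine eventually_le_tailFilter_of_bind_le ((map_bind _ _ _).ge.trans ?_)
      exact (map_mono bind_cellLimit_le).trans hZ
    rw [show r + (j + 1) = r + 1 + j by omega]
    exact eventually_cellFilter_succ.2 (h.mono fun s hs => hM _ hs)

end Cells

section FinOmega'

variable {X : (n : ℕ) → (Fin (n + 1) → ℕ) → Set ℕ}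

lemma compl_mem_cofiniteOnCells_of_mem_finPowCopy {j n r : ℕ} (hn : r + j = n) {B : Set ℕ}
    (hB : B ∈ FinPowCopy (X n)) (Z : Set ℕ) : Bᶜ ∈ cofiniteOnCells X (j + 1) r Z := by
  induction j generalizing r Z with
  | zero =>
    subst hn
    refine mem_cofiniteOnCells.2 (eventually_cellFilter_succ.2 ?_)
    filter_upwards [mem_finPow_iff_compl_mem.1 hB] with s hs
    have hs' : (B ∩ X r s).Finite := not_not.1 hs
    exact hs'.subset fun k hk => ⟨not_not.1 hk.2, hk.1.2⟩
  | succ j ih =>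
    rw [cofiniteOnCells_succ, mem_bind']
    exact Eventually.of_forall fun s => ih (by omega) (Z ∩ X r s)

lemma compl_mem_cellLimit_of_mem_finOmega' {A : Set ℕ} (hA : A ∈ FinOmega' X) :
    Aᶜ ∈ cellLimit X 0 univ := by
  obtain ⟨F, B, hB, hAB⟩ := hA
  have hBc : ⋂ n ∈ F, (B n)ᶜ ∈ cellLimit X 0 univ := (biInter_finset_mem F).2 fun n hn =>
    mem_iInf_of_mem (n + 1) <|
      compl_mem_cofiniteOnCells_of_mem_finPowCopy (Nat.zero_add n) (hB n hn) univ
  filter_upwards [hBc] with k hk hkA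
  obtain ⟨n, hn, hkn⟩ := mem_iUnion₂.1 (hAB hkA)
  exact mem_iInter₂.1 hk n hn hkn

lemma tendsto_cellLimit_tailFilter {f : ℕ → Word} (hf : ∀ A ∈ FinOmega, f ⁻¹' A ∈ FinOmega' X)
    (m : ℕ) : Tendsto f (cellLimit X 0 univ) (tailFilter m) := by
  cases m with
  | zero => exact tendsto_top
  | succ m =>
    intro U hU
    simpa using compl_mem_cellLimit_of_mem_finOmega' (hf _ (compl_mem_finOmega hU))

end FinOmega'

theorem exists_not_tendsto_cellLimit {Ω : Type*} {X : (n : ℕ) → (Fin (n + 1) → ℕ) → Set Ω}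
    (hX : ∀ r s, (cell X r s).Infinite) (f : Ω → Word) :
    ∃ m, ¬ Tendsto f (cellLimit X 0 univ) (tailFilter m) := by
  by_contra! hf
  choose 𝒞 h𝒞 hcount using fun j => exists_countable_mem_cellFilter X j 0 univ
  let c : Ω → ℕ := letterFromEnd 1 ∘ f
  obtain ⟨A, hA, hAfib⟩ := exists_infinite_inter_finite_fibers (c := c)
    (𝒮 := {Z ∈ ⋃ j, 𝒞 j | (c '' Z).Infinite})
    ((countable_iUnion hcount).mono (sep_subset _ _)) fun Z hZ => hZ.2
  have himage : (f '' A)ᶜ ∈ tailFilter 2 := by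
    refine compl_mem_fiberSum_of_finite_fibers (fiberSum_le_cofinite _ _) fun b => ?_
    rw [← image_inter_preimage]
    exact (hAfib b).image f
  obtain ⟨j, hj⟩ := mem_cellLimit.1 (hf 2 himage)
  obtain ⟨M, hM⟩ := exists_eventually_tendsto_cellLimit (X := X) f j 2 0
  have hcell : ∀ᶠ Z in cellFilter X j 0 univ, ∃ t, Z = cell X (0 + j) t := by
    simpa [cell] using eventually_cellFilter_cell (X := X) (j := j) (r := 0) fun _ _ => 0
  obtain ⟨_, hZA, hZf, ⟨t, rfl⟩, hZ𝒞⟩ :=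
    (hj.and ((hM univ (hf M)).and (hcell.and (h𝒞 j)))).exists
  have := cellLimit_cell_neBot hX (r := 0 + j) t
  have hZc : (c '' cell X (0 + j) t).Infinite := infinite_image_of_tendsto_cofinite
    ((tendsto_fiberSum_cofinite _ _).comp hZf) self_mem_cellLimit
  refine hA _ ⟨mem_iUnion_of_mem j hZ𝒞, hZc⟩ (hZA.subset ?_)
  exact fun x hx => ⟨hx.2, fun h => h (mem_image_of_mem f hx.1)⟩

end FinOmega

/-- In terms of the Katětov order: `Fin_ω ≰_K Fin'_ω`. -/
theorem finOmega_not_isoContained_finOmega'_general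
    (X : (n : ℕ) → (Fin (n + 1) → ℕ) → Set ℕ)
    (hX : ∀ (F : Finset ℕ) (s : ∀ i : ℕ, Fin (i + 1) → ℕ), (⋂ i ∈ F, X i (s i)).Infinite) :
    ¬ ∃ f : ℕ → (Σ n : ℕ, Fin (n + 1) → ℕ), ∀ A ∈ FinOmega, f ⁻¹' A ∈ FinOmega' X := by
  rintro ⟨f, hf⟩
  obtain ⟨m, hm⟩ := FinOmega.exists_not_tendsto_cellLimit (fun r => hX (Finset.range r)) f
  exact hm (FinOmega.tendsto_cellLimit_tailFilter hf m)

/-- `Fin_ω` does not embed isomorphically into `Fin'_ω`: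
there is no bijection `f : ω → ∑_{i>0} ω^i` with `f⁻¹[A] ∈ Fin'_ω` for all
`A ∈ Fin_ω`. -/
theorem finOmega_not_isoContained_finOmega'
    (X : (n : ℕ) → (Fin (n + 1) → ℕ) → Set ℕ) (hX : PartitionSystem X) :
    ¬ ∃ f : ℕ → (Σ n : ℕ, Fin (n + 1) → ℕ), Function.Bijective f ∧
        ∀ A ∈ FinOmega, f ⁻¹' A ∈ FinOmega' X :=
  fun ⟨f, _, hf⟩ => finOmega_not_isoContained_finOmega'_general X hX.cross ⟨f, hf⟩
end
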